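/- arXiv:1602.03542 — 3 statements merged into one kernel-verified Lean document; each statement's English description precedes it below -/
import Mathlib

section
/- In the setting of a weakly Hamiltonian action with Casimir-valued cocycle, the flow evaluation ζ(s) := ρ u (φ s) extends to an entire function of exponential type: there exists F : ℂ → ℂ with F differentiable on all of ℂ, F(s) = ζ(s) for every real s, and there exist constants A, B ≥ 0 such that ‖F(z)‖ ≤ A · exp(B · ‖z‖) for all z ∈ ℂ. -/
/-!
STATEMENT 11: Weakly Hamiltonian action setting.  The flow evaluation
ζ(s) := ρ u (φ s) extends to an entire function of exponential type: there is
F : ℂ → ℂ, differentiable on all of ℂ, agreeing with ζ on ℝ, and constants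
A, B ≥ 0 with ‖F(z)‖ ≤ A · exp(B · ‖z‖) for all z ∈ ℂ.
-/

noncomputable section

/-- The phase space `(Fin n → ℝ) × (Fin n → ℝ)`. -/
abbrev M (n : ℕ) : Type := (Fin n → ℝ) × (Fin n → ℝ)

/-- The standard symplectic form on `M n`. -/
def ω₀ {n : ℕ} (x y : M n) : ℝ :=
  (∑ i, x.1 i * y.2 i) - ∑ i, x.2 i * y.1 i

/-!
Along an integral curve of `X v` one has `d/ds ρ w = ρ ⁅w, v⁆ + c w v`, so the evaluations
`w ↦ ρ w (φ s)` solve an affine linear equation with constant coefficients on the dual of `𝔤`.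
Adjoining a constant coordinate removes the inhomogeneous term, and in a basis the solution is
`exp (s L) y` for a complex matrix `L`. Replacing the real time `s` by a complex `z` gives the
entire extension, and `‖exp (z L)‖ ≤ exp (‖L‖ ‖z‖)` its exponential type.
-/

/-- Entire functions of exponential type with values in a complex normed space, the type being some
unspecified `B`. -/
def IsEntireOfExponentialType {E : Type*} [NormedAddCommGroup E] [NormedSpace ℂ E]
    (F : ℂ → E) : Prop :=
  Differentiable ℂ F ∧ ∃ A B : ℝ, 0 ≤ A ∧ 0 ≤ B ∧ ∀ z : ℂ, ‖F z‖ ≤ A * Real.exp (B * ‖z‖)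

theorem IsEntireOfExponentialType.clm_comp {E F : Type*}
    [NormedAddCommGroup E] [NormedSpace ℂ E] [NormedAddCommGroup F] [NormedSpace ℂ F]
    {f : ℂ → E} (hf : IsEntireOfExponentialType f) (l : E →L[ℂ] F) :
    IsEntireOfExponentialType fun z => l (f z) := by
  obtain ⟨hdiff, A, B, hA, hB, hbound⟩ := hf
  refine ⟨l.differentiable.comp hdiff, ‖l‖ * A, B, by positivity, hB, fun z => ?_⟩
  rw [mul_assoc]
  exact l.le_opNorm_of_le (hbound z)

theorem norm_normedSpace_exp_le {A : Type*} [NormedRing A] [NormedAlgebra ℝ A] [NormOneClass A]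
    (a : A) : ‖NormedSpace.exp a‖ ≤ Real.exp ‖a‖ := by
  rw [NormedSpace.exp_eq_tsum ℝ, Real.exp_eq_exp_ℝ]
  refine tsum_of_norm_bounded (NormedSpace.expSeries_div_hasSum_exp ‖a‖) fun k => ?_
  rw [norm_smul, norm_inv, RCLike.norm_natCast, div_eq_inv_mul]
  gcongr
  exact norm_pow_le a k

theorem norm_exp_apply_le {𝕜 E : Type*} [RCLike 𝕜] [NormedAddCommGroup E] [NormedSpace 𝕜 E]
    (L : E →L[𝕜] E) (y : E) : ‖NormedSpace.exp L y‖ ≤ Real.exp ‖L‖ * ‖y‖ := by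
  let _ : NormedAlgebra ℝ (E →L[𝕜] E) := NormedAlgebra.restrictScalars ℝ 𝕜 _
  cases subsingleton_or_nontrivial E with
  | inl h => simp [Subsingleton.elim y 0]
  | inr h => exact ContinuousLinearMap.le_of_opNorm_le _ (norm_normedSpace_exp_le L) y

section LinearODE

variable {𝕜 E : Type*} [RCLike 𝕜] [NormedAddCommGroup E] [NormedSpace ℝ E] [NormedSpace 𝕜 E]
  [IsScalarTower ℝ 𝕜 E] [CompleteSpace E]

theorem hasDerivAt_exp_ofReal_smul_apply (L : E →L[𝕜] E) (y : E) (s : ℝ) :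
    HasDerivAt (fun t : ℝ => NormedSpace.exp ((t : 𝕜) • L) y)
      (L (NormedSpace.exp ((s : 𝕜) • L) y)) s := by
  have hscalar : HasDerivAt (fun z : 𝕜 => NormedSpace.exp (z • L) y)
      (L (NormedSpace.exp ((s : 𝕜) • L) y)) (s : 𝕜) :=
    (ContinuousLinearMap.apply 𝕜 E y).hasFDerivAt.comp_hasDerivAt _
      (hasDerivAt_exp_smul_const' L (s : 𝕜))
  have hofReal : HasDerivAt (fun t : ℝ => (t : 𝕜)) 1 s := by
    simpa using (RCLike.ofRealCLM (K := 𝕜)).hasDerivAt (x := s)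
  simpa only [one_smul, Function.comp_def] using hscalar.scomp s hofReal

theorem eq_exp_smul_apply_of_hasDerivAt {L : E →L[𝕜] E} {Y : ℝ → E}
    (hY : ∀ s, HasDerivAt Y (L (Y s)) s) (s : ℝ) :
    Y s = NormedSpace.exp ((s : 𝕜) • L) (Y 0) := by
  refine congrFun (ODE_solution_unique_univ (v := fun _ => L) (s := fun _ => Set.univ) (t₀ := 0)
    (fun _ => L.lipschitz.lipschitzOnWith) (fun t => ⟨hY t, trivial⟩)
    (fun t => ⟨hasDerivAt_exp_ofReal_smul_apply L (Y 0) t, trivial⟩) ?_) s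
  simp

end LinearODE

theorem isEntireOfExponentialType_exp_smul_apply {E : Type*} [NormedAddCommGroup E]
    [NormedSpace ℂ E] [CompleteSpace E] (L : E →L[ℂ] E) (y : E) :
    IsEntireOfExponentialType fun z : ℂ => NormedSpace.exp (z • L) y := by
  refine ⟨(differentiable_exp_smul_const ℂ L).clm_apply (differentiable_const y),
    ‖y‖, ‖L‖, norm_nonneg y, norm_nonneg L, fun z => ?_⟩
  calc ‖NormedSpace.exp (z • L) y‖ ≤ Real.exp ‖z • L‖ * ‖y‖ := norm_exp_apply_le _ y
    _ = ‖y‖ * Real.exp (‖L‖ * ‖z‖) := by rw [norm_smul, mul_comm ‖z‖, mul_comm]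

theorem exists_isEntireOfExponentialType_extension_of_hasDerivAt_clm {E : Type*}
    [NormedAddCommGroup E] [NormedSpace ℂ E] [CompleteSpace E] {L : E →L[ℂ] E} {Y : ℝ → E}
    (hY : ∀ s, HasDerivAt Y (L (Y s)) s) :
    ∃ F : ℂ → E, IsEntireOfExponentialType F ∧ ∀ s : ℝ, F s = Y s :=
  ⟨_, isEntireOfExponentialType_exp_smul_apply L (Y 0),
    fun s => (eq_exp_smul_apply_of_hasDerivAt hY s).symm⟩

open scoped Matrix in
theorem exists_isEntireOfExponentialType_extension_of_hasDerivAt_mulVec {ι : Type*} [Fintype ι]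
    {T : Matrix ι ι ℝ} {Y : ℝ → ι → ℝ} (hY : ∀ s, HasDerivAt Y (T *ᵥ Y s) s) :
    ∃ F : ℂ → ι → ℂ, IsEntireOfExponentialType F ∧ ∀ (s : ℝ) (i : ι), F s i = Y s i := by
  let L : (ι → ℂ) →L[ℂ] (ι → ℂ) := (T.map Complex.ofRealHom).mulVecLin.toContinuousLinearMap
  have hYL (s : ℝ) : HasDerivAt (fun t i => (Y t i : ℂ)) (L fun i => (Y s i : ℂ)) s := by
    refine hasDerivAt_pi.2 fun i => ?_
    have hL : L (fun i => (Y s i : ℂ)) i = ((T *ᵥ Y s) i : ℝ) :=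
      (RingHom.map_mulVec Complex.ofRealHom T (Y s) i).symm
    rw [hL]
    exact (hasDerivAt_pi.1 (hY s) i).ofReal_comp
  obtain ⟨F, hF, hFY⟩ := exists_isEntireOfExponentialType_extension_of_hasDerivAt_clm hYL
  exact ⟨F, hF, fun s i => congrFun (hFY s) i⟩

section DualCurve

variable {V : Type*} [AddCommGroup V] [Module ℝ V] [FiniteDimensional ℝ V]

open scoped Matrix in
theorem exists_isEntireOfExponentialType_extension_of_hasDerivAt_dual {T : V →ₗ[ℝ] V}
    {e : ℝ → V →ₗ[ℝ] ℝ} (he : ∀ w s, HasDerivAt (fun t => e t w) (e s (T w)) s) (w : V) :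
    ∃ F : ℂ → ℂ, IsEntireOfExponentialType F ∧ ∀ s : ℝ, F s = e s w := by
  let b := Module.finBasis ℝ V
  have hexpand (s : ℝ) (w : V) : e s w = ∑ i, b.repr w i * e s (b i) := by
    conv_lhs => rw [← b.sum_repr w]
    simp only [map_sum, map_smul, smul_eq_mul]
  have hY (s : ℝ) : HasDerivAt (fun t i => e t (b i))
      ((Matrix.of fun i j => b.repr (T (b i)) j) *ᵥ fun i => e s (b i)) s := by
    refine hasDerivAt_pi.2 fun i => ?_
    have hi := he (b i) s
    rwa [hexpand s (T (b i))] at hi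
  obtain ⟨F, hF, hFY⟩ := exists_isEntireOfExponentialType_extension_of_hasDerivAt_mulVec hY
  refine ⟨_, hF.clm_comp (∑ i, (b.repr w i : ℂ) • ContinuousLinearMap.proj i), fun s => ?_⟩
  simp [hFY, hexpand s w]

theorem exists_isEntireOfExponentialType_extension_of_hasDerivAt_dual_affine {T : V →ₗ[ℝ] V}
    {c : V →ₗ[ℝ] ℝ} {e : ℝ → V →ₗ[ℝ] ℝ}
    (he : ∀ w s, HasDerivAt (fun t => e t w) (e s (T w) + c w) s) (w : V) :
    ∃ F : ℂ → ℂ, IsEntireOfExponentialType F ∧ ∀ s : ℝ, F s = e s w := by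
  have hhom (p : V × ℝ) (s : ℝ) :
      HasDerivAt (fun t => (e t).coprod LinearMap.id p)
        ((e s).coprod LinearMap.id ((T.prod c ∘ₗ LinearMap.fst ℝ V ℝ) p)) s := by
    simpa using (he p.1 s).add_const p.2
  simpa using exists_isEntireOfExponentialType_extension_of_hasDerivAt_dual hhom (w, 0)

end DualCurve

theorem flow_evaluation_extends_to_entire_of_exponential_type_general
    {E V : Type*} [NormedAddCommGroup E] [NormedSpace ℝ E]
    [AddCommGroup V] [Module ℝ V] [FiniteDimensional ℝ V]
    (ρ : V →ₗ[ℝ] (E → ℝ)) (hρ : ∀ w, Differentiable ℝ (ρ w))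
    (X : E → E) (T : V →ₗ[ℝ] V) (c : V →ₗ[ℝ] ℝ)
    (hc : ∀ w x, fderiv ℝ (ρ w) x (X x) = ρ (T w) x + c w)
    (w : V) (φ : ℝ → E) (hφ : ∀ s, HasDerivAt φ (X (φ s)) s) :
    ∃ F : ℂ → ℂ, Differentiable ℂ F ∧
      (∀ s : ℝ, F s = ρ w (φ s)) ∧
      ∃ A B : ℝ, 0 ≤ A ∧ 0 ≤ B ∧
        ∀ z : ℂ, ‖F z‖ ≤ A * Real.exp (B * ‖z‖) := by
  have hflow (w : V) (s : ℝ) :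
      HasDerivAt (fun t => (LinearMap.proj (φ t) ∘ₗ ρ) w)
        ((LinearMap.proj (φ s) ∘ₗ ρ) (T w) + c w) s := by
    have hchain := (hρ w (φ s)).hasFDerivAt.comp_hasDerivAt s (hφ s)
    rwa [hc] at hchain
  obtain ⟨F, ⟨hdiff, hbound⟩, hF⟩ :=
    exists_isEntireOfExponentialType_extension_of_hasDerivAt_dual_affine hflow w
  exact ⟨F, hdiff, hF, hbound⟩

theorem flow_evaluation_extends_to_entire_of_exponential_type
    {n : ℕ} (hn : 1 ≤ n)
    {𝔤 : Type*} [LieRing 𝔤] [LieAlgebra ℝ 𝔤] [FiniteDimensional ℝ 𝔤]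
    (ρ : 𝔤 →ₗ[ℝ] (M n → ℝ))
    (hρ : ∀ u : 𝔤, ContDiff ℝ (⊤ : ℕ∞) (ρ u))
    -- X u is the Hamiltonian vector field of ρ u
    (X : 𝔤 → M n → M n)
    (hX : ∀ (u : 𝔤) (x w : M n), ω₀ (X u x) w = fderiv ℝ (ρ u) x w)
    -- c is a bilinear map with {ρ u, ρ v}(x) = ρ ⁅u,v⁆ x + c u v
    (c : 𝔤 →ₗ[ℝ] 𝔤 →ₗ[ℝ] ℝ)
    (hc : ∀ (u v : 𝔤) (x : M n), fderiv ℝ (ρ u) x (X v x) = ρ ⁅u, v⁆ x + c u v)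
    -- fixed u, v; φ is an integral curve of X v through x
    (u v : 𝔤) (x : M n) (φ : ℝ → M n)
    (hφ0 : φ 0 = x) (hφ : ∀ s : ℝ, HasDerivAt φ (X v (φ s)) s) :
    ∃ F : ℂ → ℂ, Differentiable ℂ F ∧
      (∀ s : ℝ, F s = ρ u (φ s)) ∧
      ∃ A B : ℝ, 0 ≤ A ∧ 0 ≤ B ∧
        ∀ z : ℂ, ‖F z‖ ≤ A * Real.exp (B * ‖z‖) := by
  exact flow_evaluation_extends_to_entire_of_exponential_type_general ρ
    (fun w => (hρ w).differentiable (by simp)) (X v) (-LieAlgebra.ad ℝ 𝔤 v) (c.flip v)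
    (fun w y => by rw [hc, ← lie_skew w v]; simp) u φ hφ
end
end

section
/- In the abelian weakly Hamiltonian setting with nondegenerate constant cocycle c on V and global flows φ_v, let N := {x ∈ M | ρ u x = 0 for all u ∈ V}. Then the map Ψ : V × N → M defined by Ψ(v, x) := φ_v 1 x is a bijection. (This is the set-level content of the splitting M ≅ V × N.) -/
/-!
STATEMENT 13: Abelian weakly Hamiltonian setting with nondegenerate constant
cocycle c on V and global flows φ v.  With N := {x ∈ M | ρ u x = 0 ∀ u ∈ V},
the map Ψ : V × N → M, Ψ(v, x) := φ v 1 x, is a bijection (the set-level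
content of the splitting M ≅ V × N).
-/

noncomputable section

/-!
The momentum map `x ↦ (u ↦ ρ u x)` sends `M` to the dual of `V`, and since the brackets are
constant, the time-one map of `X v` acts on its values as translation by `c · v`. By nondegeneracy
every covector is `c · v` for exactly one `v`, so for each point `z` there is exactly one `v` whose
time-one map, which is invertible, carries a point of the zero fibre `N` to `z`.
-/

open Function Manifold

theorem bijective_prod_zeroFibre_of_map_add {V S A : Type*} [AddZeroClass A]
    [IsRightCancelAdd A] {μ : S → A} {b : V → A} {T : V → S → S} (hb : Bijective b)
    (hT : ∀ v, Bijective (T v)) (hμ : ∀ v x, μ (T v x) = μ x + b v) :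
    Bijective fun p : V × {x : S // μ x = 0} => T p.1 p.2 := by
  constructor
  · rintro ⟨v, x, hx⟩ ⟨v', x', hx'⟩ (h : T v x = T v' x')
    obtain rfl : v = v' := hb.injective <| by simpa [hμ, hx, hx'] using congrArg μ h
    obtain rfl : x = x' := (hT v).injective h
    rfl
  · intro z
    obtain ⟨v, hv⟩ := hb.surjective (μ z)
    obtain ⟨x, rfl⟩ := (hT v).surjective z
    have hx : μ x + b v = 0 + b v := by rw [← hμ, zero_add, hv]
    exact ⟨(v, ⟨x, add_right_cancel hx⟩), rfl⟩

section MomentumMap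

variable {K V S : Type*} [CommSemiring K] [AddCommMonoid V] [Module K V]

/-- The momentum map of a linear family of functions `ρ u : S → K`, `u ∈ V`: it takes a point `x`
to the linear form `u ↦ ρ u x`. -/
def momentumMap (ρ : V →ₗ[K] (S → K)) (x : S) : Module.Dual K V :=
  LinearMap.proj x ∘ₗ ρ

@[simp]
theorem momentumMap_apply (ρ : V →ₗ[K] (S → K)) (x : S) (u : V) : momentumMap ρ x u = ρ u x :=
  rfl

theorem momentumMap_eq_zero_iff {ρ : V →ₗ[K] (S → K)} {x : S} :
    momentumMap ρ x = 0 ↔ ∀ u, ρ u x = 0 :=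
  LinearMap.ext_iff

end MomentumMap

theorem bijective_flip_of_separatingLeft {K V : Type*} [Field K] [AddCommGroup V] [Module K V]
    [FiniteDimensional K V] {c : V →ₗ[K] V →ₗ[K] K} (hc : c.SeparatingLeft) :
    Bijective c.flip := by
  have hinj : Injective c :=
    LinearMap.ker_eq_bot.1 (LinearMap.separatingLeft_iff_ker_eq_bot.1 hc)
  have hsurj : Surjective c :=
    (LinearMap.injective_iff_surjective_of_finrank_eq_finrank
      Subspace.dual_finrank_eq.symm).1 hinj
  exact LinearMap.flip_bijective_iff₁.2 ⟨hinj, hsurj⟩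

theorem eq_add_smul_of_forall_hasDerivAt {W : Type*} [NormedAddCommGroup W] [NormedSpace ℝ W]
    {f : ℝ → W} {a : W} (hf : ∀ t, HasDerivAt f a t) (t : ℝ) : f t = f 0 + t • a := by
  have hd : ∀ t, HasDerivAt (fun t => f t - t • a) 0 t := fun t => by
    simpa using (hf t).fun_sub ((hasDerivAt_id' t).smul_const a)
  have hconst := is_const_of_deriv_eq_zero (fun t => (hd t).differentiableAt)
    (fun t => (hd t).deriv) t 0
  rw [zero_smul, sub_zero] at hconst
  exact sub_eq_iff_eq_add.1 hconst

section IntegralCurve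

variable {E : Type*} [NormedAddCommGroup E] [NormedSpace ℝ E]

theorem isMIntegralCurve_iff_hasDerivAt {γ : ℝ → E} {Y : E → E} :
    IsMIntegralCurve (I := 𝓘(ℝ, E)) γ Y ↔ ∀ t, HasDerivAt γ (Y (γ t)) t :=
  forall_congr' fun _ => hasMFDerivAt_iff_hasFDerivAt

variable {H : Type*} [TopologicalSpace H] {I : ModelWithCorners ℝ E H}
  {P : Type*} [TopologicalSpace P] [ChartedSpace H P]
  {W : Type*} [NormedAddCommGroup W] [NormedSpace ℝ W]
  {F : P → W} {Y : (x : P) → TangentSpace I x} {γ : ℝ → P}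

theorem hasDerivAt_comp_integralCurve (hF : MDifferentiable I 𝓘(ℝ, W) F)
    (hγ : IsMIntegralCurve γ Y) (t : ℝ) :
    HasDerivAt (F ∘ γ) (mfderiv I 𝓘(ℝ, W) F (γ t) (Y (γ t))) t := by
  have h := ((hF (γ t)).hasMFDerivAt.comp t (hγ t)).hasFDerivAt
  exact hasDerivAt_iff_hasFDerivAt.2 <| h.congr_fderiv <| ContinuousLinearMap.ext_ring <|
    map_smul (mfderiv I 𝓘(ℝ, W) F (γ t)) (1 : ℝ) (Y (γ t))

theorem apply_integralCurve_eq_add_smul (hF : MDifferentiable I 𝓘(ℝ, W) F)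
    (hγ : IsMIntegralCurve γ Y) {a : W}
    (ha : ∀ t, mfderiv I 𝓘(ℝ, W) F (γ t) (Y (γ t)) = a) (t : ℝ) :
    F (γ t) = F (γ 0) + t • a :=
  eq_add_smul_of_forall_hasDerivAt
    (fun s => (hasDerivAt_comp_integralCurve hF hγ s).congr_deriv (ha s)) t

end IntegralCurve

section GlobalFlow

variable {E : Type*} [NormedAddCommGroup E] [NormedSpace ℝ E]
  {H : Type*} [TopologicalSpace H] {I : ModelWithCorners ℝ E H}
  {P : Type*} [TopologicalSpace P] [ChartedSpace H P]

/-- `φ` is a global flow of the vector field `Y`: each `t ↦ φ t x` is an integral curve of `Y`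
that starts at `x` and is defined for all times. The group law is not part of the definition. -/
structure IsGlobalFlow (φ : ℝ → P → P) (Y : (x : P) → TangentSpace I x) : Prop where
  map_zero : ∀ x, φ 0 x = x
  isMIntegralCurve : ∀ x, IsMIntegralCurve (φ · x) Y

namespace IsGlobalFlow

variable {φ : ℝ → P → P} {Y : (x : P) → TangentSpace I x}

theorem apply_eq_add_smul {W : Type*} [NormedAddCommGroup W] [NormedSpace ℝ W]
    (hφ : IsGlobalFlow φ Y) {F : P → W} (hF : MDifferentiable I 𝓘(ℝ, W) F) {a : W}
    (ha : ∀ x, mfderiv I 𝓘(ℝ, W) F x (Y x) = a) (t : ℝ) (x : P) :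
    F (φ t x) = F x + t • a := by
  simpa only [hφ.map_zero] using
    apply_integralCurve_eq_add_smul hF (hφ.isMIntegralCurve x) (fun s => ha (φ s x)) t

variable [IsManifold I 1 P] [BoundarylessManifold I P] [T2Space P]

theorem map_add (hφ : IsGlobalFlow φ Y)
    (hY : ContMDiff I I.tangent 1 fun x => (⟨x, Y x⟩ : TangentBundle I P)) (s t : ℝ) (x : P) :
    φ (s + t) x = φ s (φ t x) :=
  congrFun (isMIntegralCurve_Ioo_eq_of_contMDiff_boundaryless (t₀ := 0) hY
    ((hφ.isMIntegralCurve x).comp_add t) (hφ.isMIntegralCurve (φ t x))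
    (by simp [hφ.map_zero])) s

theorem bijective (hφ : IsGlobalFlow φ Y)
    (hY : ContMDiff I I.tangent 1 fun x => (⟨x, Y x⟩ : TangentBundle I P)) (t : ℝ) :
    Bijective (φ t) := by
  refine bijective_iff_has_inverse.2 ⟨φ (-t), fun x => ?_, fun x => ?_⟩
  · rw [← hφ.map_add hY, neg_add_cancel, hφ.map_zero]
  · rw [← hφ.map_add hY, add_neg_cancel, hφ.map_zero]

end IsGlobalFlow

theorem splitting_bijection_general [IsManifold I 1 P] [BoundarylessManifold I P]
    [T2Space P] {V : Type*} [AddCommGroup V] [Module ℝ V] [FiniteDimensional ℝ V]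
    (ρ : V →ₗ[ℝ] (P → ℝ)) (hρ : ∀ u, MDifferentiable I 𝓘(ℝ, ℝ) (ρ u))
    (X : V → (x : P) → TangentSpace I x)
    (hX : ∀ v, ContMDiff I I.tangent 1 fun x => (⟨x, X v x⟩ : TangentBundle I P))
    (c : V →ₗ[ℝ] V →ₗ[ℝ] ℝ) (hc : c.SeparatingLeft)
    (hbr : ∀ u v x, mfderiv I 𝓘(ℝ, ℝ) (ρ u) x (X v x) = c u v)
    (φ : V → ℝ → P → P) (hφ : ∀ v, IsGlobalFlow (φ v) (X v)) :
    Bijective fun p : V × {x : P // ∀ u, ρ u x = 0} => φ p.1 1 p.2 := by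
  have hμ : ∀ v x, momentumMap ρ (φ v 1 x) = momentumMap ρ x + c.flip v := fun v x => by
    ext u
    simpa using (hφ v).apply_eq_add_smul (hρ u) (hbr u v) 1 x
  have hbij := bijective_prod_zeroFibre_of_map_add (bijective_flip_of_separatingLeft hc)
    (fun v => (hφ v).bijective (hX v) 1) hμ
  exact hbij.comp (Equiv.prodCongr (.refl V)
    (Equiv.subtypeEquivRight fun _ => momentumMap_eq_zero_iff.symm)).bijective

end GlobalFlow

section Hamiltonian

variable {n : ℕ}

theorem ω₀_prod_zero_single (x : M n) (i : Fin n) : ω₀ x (0, Pi.single i 1) = x.1 i := by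
  simp [ω₀, Pi.single_apply]

theorem ω₀_prod_single_zero (x : M n) (i : Fin n) : ω₀ x (Pi.single i 1, 0) = -x.2 i := by
  simp [ω₀, Pi.single_apply]

theorem contDiff_of_ω₀_eq_fderiv {k m : WithTop ℕ∞} {F : M n → ℝ} (hF : ContDiff ℝ m F)
    (hkm : k + 1 ≤ m) {Y : M n → M n} (hY : ∀ x w, ω₀ (Y x) w = fderiv ℝ F x w) :
    ContDiff ℝ k Y := by
  have hdF : ∀ w, ContDiff ℝ k fun x => fderiv ℝ F x w := fun w =>
    (hF.fderiv_right hkm).clm_apply contDiff_const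
  have hq : ∀ i x, (Y x).1 i = fderiv ℝ F x (0, Pi.single i 1) := fun i x => by
    rw [← hY, ω₀_prod_zero_single]
  have hp : ∀ i x, (Y x).2 i = -fderiv ℝ F x (Pi.single i 1, 0) := fun i x => by
    rw [← hY, ω₀_prod_single_zero, neg_neg]
  refine ContDiff.prodMk (contDiff_pi.2 fun i => ?_) (contDiff_pi.2 fun i => ?_)
  · simpa only [hq] using hdF (0, Pi.single i 1)
  · simpa only [hp] using (hdF (Pi.single i 1, 0)).neg

end Hamiltonian

theorem splitting_bijection
    {n : ℕ} (hn : 1 ≤ n)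
    {V : Type*} [AddCommGroup V] [Module ℝ V] [FiniteDimensional ℝ V]
    (ρ : V →ₗ[ℝ] (M n → ℝ))
    (hρ : ∀ u : V, ContDiff ℝ (⊤ : ℕ∞) (ρ u))
    -- X u is the Hamiltonian vector field of ρ u
    (X : V → M n → M n)
    (hX : ∀ (u : V) (x w : M n), ω₀ (X u x) w = fderiv ℝ (ρ u) x w)
    -- c is an alternating bilinear form with {ρ u, ρ v}(x) = c u v
    (c : V →ₗ[ℝ] V →ₗ[ℝ] ℝ)
    (h_alt : ∀ u : V, c u u = 0)
    (hbr : ∀ (u v : V) (x : M n), fderiv ℝ (ρ u) x (X v x) = c u v)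
    -- c is nondegenerate
    (h_nondeg : ∀ u : V, u ≠ 0 → ∃ v : V, c u v ≠ 0)
    -- φ v is a global flow of X v
    (φ : V → ℝ → M n → M n)
    (hφ0 : ∀ (v : V) (y : M n), φ v 0 y = y)
    (hφ : ∀ (v : V) (y : M n) (s : ℝ),
      HasDerivAt (fun t => φ v t y) (X v (φ v s y)) s) :
    Function.Bijective
      (fun p : V × {x : M n // ∀ u : V, ρ u x = 0} => φ p.1 1 (p.2 : M n)) := by
  have hX₁ : ∀ v, ContDiff ℝ 1 (X v) := fun v =>
    contDiff_of_ω₀_eq_fderiv (hρ v) (one_add_one_eq_two.trans_le ENat.LEInfty.out) (hX v)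
  have hc : c.SeparatingLeft := fun u hu => by simpa [hu] using h_nondeg u
  have hflow : ∀ v, IsGlobalFlow (I := 𝓘(ℝ, M n)) (φ v) (X v) := fun v =>
    ⟨hφ0 v, fun y => isMIntegralCurve_iff_hasDerivAt.2 (hφ v y)⟩
  exact splitting_bijection_general ρ (fun u => ((hρ u).differentiable (by simp)).mdifferentiable)
    X (fun v => contMDiff_vectorSpace_iff_contDiff.2 (hX₁ v)) c hc
    (fun u v x => by rw [mfderiv_eq_fderiv]; exact hbr u v x) φ hflow
end
end

section
/- In the abelian weakly Hamiltonian setting with nondegenerate constant cocycle c on V: for every x ∈ M, (i) ω₀(X_{ρ u} x, X_{ρ v} x) = c u v for all u, v ∈ V; (ii) the linear map V → M, u ↦ X_{ρ u} x, is injective, and ω₀ restricts to a nondegenerate form on its range W_x; (iii) M is the direct sum of W_x and K_x := {w ∈ M | fderiv ℝ (ρ u) x w = 0 for all u ∈ V}; (iv) ω₀ restricted to K_x is nondegenerate. (This is the pointwise symplectic splitting underlying the fact that N is a symplectic/Poisson-Dirac submanifold and the leaves L_x are symplectic.) -/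
/-!
STATEMENT 15: Abelian weakly Hamiltonian setting with nondegenerate constant
cocycle c on V: for every x ∈ M,
(i)   ω₀(X u x, X v x) = c u v for all u, v ∈ V;
(ii)  u ↦ X u x is injective and ω₀ restricts nondegenerately to its range W_x;
(iii) M = W_x ⊕ K_x, where K_x = {w | fderiv ℝ (ρ u) x w = 0 ∀ u};
(iv)  ω₀ restricted to K_x is nondegenerate.
-/

noncomputable section

/-!
By the bracket relation, `u ↦ X u x` pulls `ω₀` back to `c`. As `c` is nondegenerate, the map is
injective and its range `W_x` is a symplectic subspace, while the defining property of `X` exhibits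
`K_x` as the `ω₀`-orthogonal of `W_x`. A finite-dimensional subspace on which a form is
nondegenerate is complemented by its orthogonal, and a vector of that orthogonal which is
orthogonal to all of it is then orthogonal to the whole space, hence zero.
-/

open LinearMap (BilinForm)

section BilinForm

variable {R V E : Type*} [CommRing R] [AddCommGroup V] [Module R V] [AddCommGroup E] [Module R E]
  {B : BilinForm R E}

theorem injective_of_separatingLeft_comp {X : V →ₗ[R] E} (h : (B.comp X X).SeparatingLeft) :
    Function.Injective X := by
  refine (injective_iff_map_eq_zero X).2 fun u hu ↦ h u fun v ↦ ?_
  rw [BilinForm.comp_apply, hu, BilinForm.zero_left]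

theorem nondegenerate_restrict_range {X : V →ₗ[R] E} (h : (B.comp X X).Nondegenerate) :
    (B.restrict X.range).Nondegenerate :=
  let e := LinearEquiv.ofInjective X (injective_of_separatingLeft_comp h.1)
  (BilinForm.nondegenerate_congr_iff e.symm).1 h

theorem nondegenerate_restrict_orthogonal (hB : B.IsRefl) (hB' : B.Nondegenerate)
    {W : Submodule R E} (hW : Codisjoint W (B.orthogonal W)) :
    (B.restrict (B.orthogonal W)).Nondegenerate := by
  have hker : (B.restrict (B.orthogonal W)).ker = ⊥ := by
    rw [BilinForm.ker_restrict_eq_of_codisjoint hW.symm fun k hk w hw ↦ hB _ _ (hk w hw),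
      hB'.ker_eq_bot, Submodule.comap_bot, Submodule.ker_subtype]
  exact (hB.domRestrict _).nondegenerate_iff_separatingLeft.2
    (LinearMap.separatingLeft_iff_ker_eq_bot.2 hker)

theorem exists_mem_apply_ne_zero_of_nondegenerate_restrict {W : Submodule R E}
    (hW : (B.restrict W).Nondegenerate) {w : E} (hw : w ∈ W) (hw₀ : w ≠ 0) :
    ∃ w' ∈ W, B w w' ≠ 0 := by
  by_contra! h
  exact hw₀ (congrArg Subtype.val (hW.1 ⟨w, hw⟩ fun w' ↦ h w' w'.2))

theorem isCompl_orthogonal_of_finiteDimensional {K E : Type*} [Field K] [AddCommGroup E]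
    [Module K E] {B : BilinForm K E} {W : Submodule K E} [FiniteDimensional K W]
    (hW : (B.restrict W).Nondegenerate) : IsCompl W (B.orthogonal W) := by
  constructor
  · refine Submodule.disjoint_def.2 fun m hm hmW ↦ ?_
    exact congrArg Subtype.val (hW.2 ⟨m, hm⟩ fun n ↦ hmW n n.2)
  · refine codisjoint_iff.2 <| Submodule.eq_top_iff'.2 fun m ↦ ?_
    let w : W := ((B.restrict W).flip.toDual hW.flip).symm ((B.flip m).domRestrict W)
    have hw (n : W) : B n w = B n m := BilinForm.apply_toDual_symm_apply (hB := hW.flip) _ n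
    refine Submodule.mem_sup.2 ⟨w, w.2, m - w, fun n hn ↦ ?_, add_sub_cancel _ _⟩
    rw [map_sub, hw ⟨n, hn⟩, sub_self]

end BilinForm

section HamiltonianVectors

variable {𝕜 V E : Type*} [NontriviallyNormedField 𝕜] [AddCommGroup V] [Module 𝕜 V]
  [NormedAddCommGroup E] [NormedSpace 𝕜 E] {ω : BilinForm 𝕜 E} {ρ : V →ₗ[𝕜] (E → 𝕜)} {x : E}

theorem isLinearMap_of_apply_eq_fderiv (hω : ω.SeparatingLeft)
    (hρ : ∀ u, DifferentiableAt 𝕜 (ρ u) x) {X : V → E}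
    (hX : ∀ u w, ω (X u) w = fderiv 𝕜 (ρ u) x w) : IsLinearMap 𝕜 X := by
  have hinj : Function.Injective ω :=
    LinearMap.ker_eq_bot.1 (LinearMap.separatingLeft_iff_ker_eq_bot.1 hω)
  constructor
  · refine fun u v ↦ hinj (LinearMap.ext fun w ↦ ?_)
    rw [hX, map_add, fderiv_add (hρ u) (hρ v), add_apply, map_add, LinearMap.add_apply, hX, hX]
  · refine fun a u ↦ hinj (LinearMap.ext fun w ↦ ?_)
    rw [hX, map_smul, fderiv_const_smul (hρ u), smul_apply, map_smul, LinearMap.smul_apply, hX]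

theorem mem_orthogonal_range_iff_fderiv_eq_zero {X : V →ₗ[𝕜] E}
    (hX : ∀ u w, ω (X u) w = fderiv 𝕜 (ρ u) x w) {w : E} :
    w ∈ ω.orthogonal X.range ↔ ∀ u, fderiv 𝕜 (ρ u) x w = 0 := by
  simp only [BilinForm.mem_orthogonal_iff, LinearMap.mem_range, forall_exists_index,
    forall_apply_eq_imp_iff, hX]

theorem pointwise_symplectic_splitting_general [FiniteDimensional 𝕜 V] (hω : ω.IsRefl)
    (hω' : ω.Nondegenerate) (hρ : ∀ u, DifferentiableAt 𝕜 (ρ u) x) {X : V → E}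
    (hX : ∀ u w, ω (X u) w = fderiv 𝕜 (ρ u) x w) {c : BilinForm 𝕜 V}
    (hbr : ∀ u v, fderiv 𝕜 (ρ u) x (X v) = c u v) (hc : c.SeparatingLeft) :
    (∀ u v, ω (X u) (X v) = c u v) ∧
    Function.Injective X ∧
    (∀ w ∈ Set.range X, w ≠ 0 → ∃ w' ∈ Set.range X, ω w w' ≠ 0) ∧
    (∀ m, ∃ w ∈ Set.range X, ∃ k ∈ {w | ∀ u, fderiv 𝕜 (ρ u) x w = 0}, m = w + k) ∧
    (∀ m ∈ Set.range X, m ∈ {w | ∀ u, fderiv 𝕜 (ρ u) x w = 0} → m = 0) ∧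
    (∀ w ∈ {w | ∀ u, fderiv 𝕜 (ρ u) x w = 0}, w ≠ 0 →
      ∃ w' ∈ {w | ∀ u, fderiv 𝕜 (ρ u) x w = 0}, ω w w' ≠ 0) := by
  have hXc (u v : V) : ω (X u) (X v) = c u v := (hX u _).trans (hbr u v)
  obtain ⟨X, rfl⟩ : ∃ Y : V →ₗ[𝕜] E, ⇑Y = X :=
    ⟨(isLinearMap_of_apply_eq_fderiv hω'.1 hρ hX).mk' X, rfl⟩
  obtain rfl : ω.comp X X = c := LinearMap.ext₂ hXc
  have hc' : (ω.comp X X).Nondegenerate :=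
    LinearMap.IsRefl.nondegenerate_iff_separatingLeft (fun u v ↦ hω (X u) (X v)) |>.2 hc
  have hW : (ω.restrict X.range).Nondegenerate := nondegenerate_restrict_range hc'
  have hWK : IsCompl X.range (ω.orthogonal X.range) := isCompl_orthogonal_of_finiteDimensional hW
  have hK : (ω.restrict (ω.orthogonal X.range)).Nondegenerate :=
    nondegenerate_restrict_orthogonal hω hω' hWK.codisjoint
  have hK_eq : {w | ∀ u, fderiv 𝕜 (ρ u) x w = 0} = ω.orthogonal X.range :=
    Set.ext fun w ↦ (mem_orthogonal_range_iff_fderiv_eq_zero hX).symm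
  rw [hK_eq, ← LinearMap.coe_range]
  refine ⟨hXc, injective_of_separatingLeft_comp hc,
    fun _ ↦ exists_mem_apply_ne_zero_of_nondegenerate_restrict hW,
    fun m ↦ ?_, Submodule.disjoint_def.1 hWK.disjoint,
    fun _ ↦ exists_mem_apply_ne_zero_of_nondegenerate_restrict hK⟩
  obtain ⟨w, k, hw, hk, h⟩ := Submodule.codisjoint_iff_exists_add_eq.1 hWK.codisjoint m
  exact ⟨w, hw, k, hk, h.symm⟩

end HamiltonianVectors

section StandardSymplecticForm

variable {n : ℕ}

theorem ω₀_swap (x y : M n) : ω₀ x y = -ω₀ y x := by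
  simp only [ω₀, mul_comm, neg_sub]

theorem ω₀_add_right (x y z : M n) : ω₀ x (y + z) = ω₀ x y + ω₀ x z := by
  simp only [ω₀, Prod.fst_add, Prod.snd_add, Pi.add_apply, mul_add, Finset.sum_add_distrib]
  ring

theorem ω₀_smul_right (a : ℝ) (x y : M n) : ω₀ x (a • y) = a * ω₀ x y := by
  simp only [ω₀, Prod.smul_fst, Prod.smul_snd, Pi.smul_apply, smul_eq_mul, mul_left_comm _ a,
    ← Finset.mul_sum, mul_sub]

theorem eq_zero_of_ω₀_eq_zero {x : M n} (h : ∀ y, ω₀ x y = 0) : x = 0 := by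
  ext i
  · simpa [ω₀, Pi.single_apply] using h (0, Pi.single i 1)
  · simpa [ω₀, Pi.single_apply] using h (Pi.single i 1, 0)

/-- The standard symplectic form `ω₀`, bundled as a bilinear form so that the general theory
of reflexive and nondegenerate forms applies to it. -/
def standardSymplecticForm (n : ℕ) : BilinForm ℝ (M n) :=
  LinearMap.mk₂ ℝ ω₀
    (fun x y z ↦ by rw [ω₀_swap, ω₀_add_right, neg_add, ← ω₀_swap, ← ω₀_swap])
    (fun a x y ↦ by rw [ω₀_swap, ω₀_smul_right, ← mul_neg, ← ω₀_swap, smul_eq_mul])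
    ω₀_add_right ω₀_smul_right

theorem standardSymplecticForm_isAlt : (standardSymplecticForm n).IsAlt :=
  fun x ↦ self_eq_neg.1 (ω₀_swap x x)

theorem standardSymplecticForm_nondegenerate : (standardSymplecticForm n).Nondegenerate :=
  standardSymplecticForm_isAlt.isRefl.nondegenerate_iff_separatingLeft.2
    fun _ ↦ eq_zero_of_ω₀_eq_zero

end StandardSymplecticForm

theorem pointwise_symplectic_splitting
    {n : ℕ} (hn : 1 ≤ n)
    {V : Type*} [AddCommGroup V] [Module ℝ V] [FiniteDimensional ℝ V]
    (ρ : V →ₗ[ℝ] (M n → ℝ))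
    (hρ : ∀ u : V, ContDiff ℝ (⊤ : ℕ∞) (ρ u))
    -- X u is the Hamiltonian vector field of ρ u
    (X : V → M n → M n)
    (hX : ∀ (u : V) (x w : M n), ω₀ (X u x) w = fderiv ℝ (ρ u) x w)
    -- c is an alternating bilinear form with {ρ u, ρ v}(x) = c u v
    (c : V →ₗ[ℝ] V →ₗ[ℝ] ℝ)
    (h_alt : ∀ u : V, c u u = 0)
    (hbr : ∀ (u v : V) (x : M n), fderiv ℝ (ρ u) x (X v x) = c u v)
    -- c is nondegenerate
    (h_nondeg : ∀ u : V, u ≠ 0 → ∃ v : V, c u v ≠ 0) :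
    ∀ x : M n,
      -- (i)
      (∀ u v : V, ω₀ (X u x) (X v x) = c u v) ∧
      -- (ii) injectivity and nondegeneracy of ω₀ on W_x := range (u ↦ X u x)
      (Function.Injective (fun u : V => X u x)) ∧
      (∀ w ∈ Set.range (fun u : V => X u x), w ≠ 0 →
        ∃ w' ∈ Set.range (fun u : V => X u x), ω₀ w w' ≠ 0) ∧
      -- (iii) M = W_x ⊕ K_x
      (∀ m : M n, ∃ w ∈ Set.range (fun u : V => X u x),
        ∃ k ∈ {w : M n | ∀ u : V, fderiv ℝ (ρ u) x w = 0}, m = w + k) ∧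
      (∀ m ∈ Set.range (fun u : V => X u x),
        m ∈ {w : M n | ∀ u : V, fderiv ℝ (ρ u) x w = 0} → m = 0) ∧
      -- (iv) ω₀ is nondegenerate on K_x
      (∀ w ∈ {w : M n | ∀ u : V, fderiv ℝ (ρ u) x w = 0}, w ≠ 0 →
        ∃ w' ∈ {w : M n | ∀ u : V, fderiv ℝ (ρ u) x w = 0}, ω₀ w w' ≠ 0) := fun x ↦
  pointwise_symplectic_splitting_general standardSymplecticForm_isAlt.isRefl
    standardSymplecticForm_nondegenerate (fun u ↦ (hρ u).differentiable (by simp) x)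
    (fun u ↦ hX u x) (fun u v ↦ hbr u v x)
    (fun u ↦ by simpa using mt (h_nondeg u))
end
end
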